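/- Let t be a univariate polynomial of degree p with t'(0) < 0 and suppose R₊ = {α > 0 : t'(α) = 0 or t''(α)α - p t'(α) = 0} is nonempty with smallest element ᾱ, which is a simple root of the relevant polynomial. Then every α ∈ (0, ᾱ) is a persistent regularized minimizer of t, and every persistent regularized minimizer of t lies in (0, ᾱ]. -/

import Mathlib

/-- A minimizer curve of the family of regularized models `m σ`. -/
def IsMinimizerCurve (m : ℝ → ℝ → ℝ) (I : Set ℝ) (ψ : ℝ → ℝ) : Prop :=
  I ⊆ Set.Ici 0 ∧ I.OrdConnected ∧ ContinuousOn ψ I ∧ ∀ σ ∈ I, IsLocalMin (m σ) (ψ σ)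

/-- A maximal minimizer curve: it cannot be extended to a strictly larger interval. -/
def IsMaximalMinimizerCurve (m : ℝ → ℝ → ℝ) (I : Set ℝ) (ψ : ℝ → ℝ) : Prop :=
  IsMinimizerCurve m I ψ ∧
  ∀ (J : Set ℝ) (φ : ℝ → ℝ), IsMinimizerCurve m J φ → I ⊆ J →
    (∀ σ ∈ I, φ σ = ψ σ) → J = I

/-- A persistent regularized minimizer: lies on a persistent maximal minimizer curve. -/
def IsPersistentRegMin (m : ℝ → ℝ → ℝ) (α : ℝ) : Prop :=
  ∃ (I : Set ℝ) (ψ : ℝ → ℝ), IsMaximalMinimizerCurve m I ψ ∧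
    (∃ c : ℝ, 0 ≤ c ∧ Set.Ioi c ⊆ I) ∧ ∃ σ ∈ I, ψ σ = α

lemma hasDerivAt_model (p : ℕ) (hp : 2 ≤ p) (t : Polynomial ℝ) (σ s : ℝ) :
    HasDerivAt (fun s : ℝ => t.eval s + σ / ((p : ℝ) + 1) * |s| ^ (p + 1))
      (t.derivative.eval s + σ * (s * |s| ^ (p - 1))) s := by
  have hp2 : (2 : ℝ) ≤ p := by exact_mod_cast hp
  have h1 := hasDerivAt_abs_rpow s (p := (p : ℝ) + 1) (by linarith)
  have e1 : (fun x : ℝ => |x| ^ ((p : ℝ) + 1)) = fun x : ℝ => |x| ^ (p + 1) := by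
    funext x
    rw [← Real.rpow_natCast]; push_cast; rfl
  have e2 : |s| ^ ((p : ℝ) + 1 - 2) = |s| ^ (p - 1) := by
    rw [← Real.rpow_natCast, Nat.cast_sub (by omega)]; congr 1; push_cast; ring
  rw [e1, e2] at h1
  have h2 := (t.hasDerivAt s).add (h1.const_mul (σ / ((p : ℝ) + 1)))
  refine h2.congr_deriv ?_
  have : (p : ℝ) + 1 ≠ 0 := by linarith
  field_simp

lemma crit_of_localMin (p : ℕ) (hp : 2 ≤ p) (t : Polynomial ℝ) (σ s : ℝ)
    (h : IsLocalMin (fun s : ℝ => t.eval s + σ / ((p : ℝ) + 1) * |s| ^ (p + 1)) s) :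
    t.derivative.eval s + σ * (s * |s| ^ (p - 1)) = 0 :=
  h.hasDerivAt_eq_zero (hasDerivAt_model p hp t σ s)

lemma pos_pow_aux (p : ℕ) (hp : 2 ≤ p) (s : ℝ) (hs : 0 < s) : s * |s| ^ (p - 1) = s ^ p := by
  rw [abs_of_pos hs]
  obtain ⟨n, rfl⟩ : ∃ n, p = n + 1 := ⟨p - 1, by omega⟩
  rw [Nat.add_sub_cancel, pow_succ']

/-- the curve parameter -/
noncomputable def Gfun (p : ℕ) (t : Polynomial ℝ) (s : ℝ) : ℝ := - t.derivative.eval s / s ^ p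

lemma Gfun_eq_of_localMin (p : ℕ) (hp : 2 ≤ p) (t : Polynomial ℝ) (σ s : ℝ) (hs : 0 < s)
    (h : IsLocalMin (fun s : ℝ => t.eval s + σ / ((p : ℝ) + 1) * |s| ^ (p + 1)) s) :
    Gfun p t s = σ := by
  have := crit_of_localMin p hp t σ s h
  rw [pos_pow_aux p hp s hs] at this
  have hpos : 0 < s ^ p := by positivity
  unfold Gfun
  rw [div_eq_iff hpos.ne']; linarith

lemma hasDerivAt_Gfun (p : ℕ) (hp : 2 ≤ p) (t : Polynomial ℝ) (s : ℝ) (hs : 0 < s) :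
    HasDerivAt (Gfun p t)
      (-(t.derivative.derivative.eval s * s - (p : ℝ) * t.derivative.eval s) / s ^ (p + 1)) s := by
  have h1 := (t.derivative.hasDerivAt s).neg.div (hasDerivAt_pow p s) (by positivity)
  refine h1.congr_deriv ?_
  obtain ⟨n, rfl⟩ : ∃ n, p = n + 1 := ⟨p - 1, by omega⟩
  simp only [Nat.add_sub_cancel, Pi.neg_apply]
  field_simp
  ring

lemma continuousOn_Gfun (p : ℕ) (hp : 2 ≤ p) (t : Polynomial ℝ) :
    ContinuousOn (Gfun p t) (Set.Ioi 0) := fun s hs =>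
  (hasDerivAt_Gfun p hp t s hs).continuousAt.continuousWithinAt

/-- for large `σ`, critical points are small -/
lemma small_crit (p : ℕ) (t : Polynomial ℝ) (ht : t.natDegree ≤ p) (δ : ℝ) (hδ : 0 < δ) :
    ∃ M : ℝ, 0 ≤ M ∧ ∀ s : ℝ, δ ≤ |s| → |t.eval s| ≤ M * |s| ^ p := by
  refine ⟨∑ i ∈ Finset.range (p + 1), |t.coeff i| / δ ^ (p - i), by positivity, ?_⟩
  intro s hs
  rw [Polynomial.eval_eq_sum_range' (Nat.lt_succ_of_le ht), Finset.sum_mul]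
  refine (Finset.abs_sum_le_sum_abs _ _).trans (Finset.sum_le_sum ?_)
  intro i hi
  have hi' : i ≤ p := by simpa [Nat.lt_succ_iff] using hi
  rw [abs_mul, abs_pow]
  have e : |s| ^ p = |s| ^ i * |s| ^ (p - i) := by rw [← pow_add]; congr 1; omega
  rw [e, div_mul_eq_mul_div, le_div_iff₀ (by positivity)]
  have : δ ^ (p - i) ≤ |s| ^ (p - i) := pow_le_pow_left₀ hδ.le hs _
  have h2 : 0 ≤ |t.coeff i| * |s| ^ i := by positivity
  nlinarith [mul_le_mul_of_nonneg_left this h2]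

lemma neg_of_no_root (q : Polynomial ℝ) (h0 : q.eval 0 < 0) (a : ℝ)
    (h : ∀ x, 0 < x → x < a → q.eval x ≠ 0) : ∀ x, 0 < x → x < a → q.eval x < 0 := by
  intro x hx hxa
  by_contra hc
  push Not at hc
  obtain ⟨y, hy, hy0⟩ := intermediate_value_Icc hx.le q.continuous.continuousOn ⟨h0.le, hc⟩
  have : y ≠ 0 := by rintro rfl; exact h0.ne hy0
  exact h y (lt_of_le_of_ne hy.1 this.symm) (hy.2.trans_lt hxa) hy0

lemma Gfun_anti (p : ℕ) (hp : 2 ≤ p) (t : Polynomial ℝ) (abar : ℝ)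
    (hh : ∀ x, 0 < x → x < abar →
      0 < t.derivative.derivative.eval x * x - (p : ℝ) * t.derivative.eval x) :
    StrictAntiOn (Gfun p t) (Set.Ioc 0 abar) := by
  refine strictAntiOn_of_deriv_neg (convex_Ioc _ _)
    ((continuousOn_Gfun p hp t).mono fun x hx => hx.1) ?_
  intro x hx
  rw [interior_Ioc] at hx
  rw [(hasDerivAt_Gfun p hp t x hx.1).deriv]
  have hx1 := hx.1
  exact div_neg_of_neg_of_pos (neg_neg_of_pos (hh x hx.1 hx.2)) (by positivity)

lemma Gfun_surj (p : ℕ) (hp : 2 ≤ p) (t : Polynomial ℝ) (h0 : t.derivative.eval 0 < 0)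
    (abar : ℝ) (hab : 0 < abar) (σ : ℝ) (hσ : Gfun p t abar < σ) :
    ∃ x, 0 < x ∧ x < abar ∧ Gfun p t x = σ := by
  have hlim : Filter.Tendsto (Gfun p t) (nhdsWithin 0 (Set.Ioi 0)) Filter.atTop := by
    unfold Gfun
    simp only [div_eq_mul_inv]
    refine Filter.Tendsto.pos_mul_atTop (C := - t.derivative.eval 0) (by linarith) ?_ ?_
    · exact (t.derivative.continuous.neg.tendsto 0).mono_left nhdsWithin_le_nhds
    · simp only [← inv_pow]
      exact (Filter.tendsto_pow_atTop (by omega)).comp tendsto_inv_nhdsGT_zero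
  obtain ⟨y, hy1, hy2⟩ := ((hlim.eventually_gt_atTop σ).and
    (Ioo_mem_nhdsGT hab)).exists
  obtain ⟨x, hx, hxe⟩ := intermediate_value_Icc' hy2.2.le
    ((continuousOn_Gfun p hp t).mono fun x hx => lt_of_lt_of_le hy2.1 hx.1) ⟨hσ.le, hy1.le⟩
  refine ⟨x, hy2.1.trans_le hx.1, lt_of_le_of_ne hx.2 ?_, hxe⟩
  rintro rfl
  exact hσ.ne hxe

lemma localMin_of_Gfun (p : ℕ) (hp : 2 ≤ p) (t : Polynomial ℝ) (abar : ℝ)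
    (hh : ∀ x, 0 < x → x < abar →
      0 < t.derivative.derivative.eval x * x - (p : ℝ) * t.derivative.eval x)
    (x : ℝ) (hx : 0 < x) (hxa : x < abar) :
    IsLocalMin (fun s : ℝ => t.eval s + Gfun p t x / ((p : ℝ) + 1) * |s| ^ (p + 1)) x := by
  have key : ∀ s, 0 < s → deriv
      (fun s : ℝ => t.eval s + Gfun p t x / ((p : ℝ) + 1) * |s| ^ (p + 1)) s
      = s ^ p * (Gfun p t x - Gfun p t s) := by
    intro s hs
    rw [(hasDerivAt_model p hp t _ s).deriv, pos_pow_aux p hp s hs, mul_sub]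
    have : s ^ p * Gfun p t s = - t.derivative.eval s := by
      unfold Gfun; field_simp
    rw [this]; ring
  have anti := Gfun_anti p hp t abar hh
  refine isLocalMin_of_deriv_Ioo hx hxa
    (hasDerivAt_model p hp t _ x).continuousAt
    (fun s _ => (hasDerivAt_model p hp t _ s).differentiableAt.differentiableWithinAt)
    (fun s _ => (hasDerivAt_model p hp t _ s).differentiableAt.differentiableWithinAt) ?_ ?_
  · intro s hs
    rw [key s hs.1]
    have := anti ⟨hs.1, (hs.2.trans hxa).le⟩ ⟨hx, hxa.le⟩ hs.2
    exact mul_nonpos_of_nonneg_of_nonpos (pow_nonneg hs.1.le _) (by linarith)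
  · intro s hs
    rw [key s (hx.trans hs.1)]
    have := anti ⟨hx, hxa.le⟩ ⟨hx.trans hs.1, hs.2.le⟩ hs.1
    exact mul_nonneg (pow_nonneg (hx.trans hs.1).le _) (by linarith)

lemma curve_bound (p : ℕ) (hp : 2 ≤ p) (t : Polynomial ℝ)
    (hdeg : t.natDegree = p) (h0 : t.derivative.eval 0 < 0)
    (abar : ℝ) (hab : 0 < abar)
    (hGmin : 0 < Gfun p t abar → ∃ b, abar < b ∧ ∀ x, abar < x → x < b →
      Gfun p t abar < Gfun p t x)
    (I : Set ℝ) (ψ : ℝ → ℝ)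
    (hI : IsMinimizerCurve (fun σ s => t.eval s + σ / ((p : ℝ) + 1) * |s| ^ (p + 1)) I ψ)
    (c : ℝ) (hc : Set.Ioi c ⊆ I) (σ₀ : ℝ) (hσ₀ : σ₀ ∈ I) :
    0 < ψ σ₀ ∧ ψ σ₀ ≤ abar := by
  obtain ⟨hI0, hIc, hcont, hmin⟩ := hI
  obtain ⟨δ, hδ, hδT⟩ : ∃ δ > 0, ∀ s, |s| < δ → t.derivative.eval s < 0 := by
    have := (t.derivative.continuous.tendsto 0).eventually_lt_const h0
    obtain ⟨δ, hδ, h⟩ := Metric.eventually_nhds_iff.1 this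
    exact ⟨δ, hδ, fun s hs => h (by simpa [Real.dist_eq] using hs)⟩
  obtain ⟨M, hM0, hM⟩ := small_crit p t.derivative
    ((Polynomial.natDegree_derivative_le t).trans (by omega)) (min δ abar) (lt_min hδ hab)
  -- a large parameter
  obtain ⟨σ₂, h2c, h2M, h20⟩ : ∃ σ₂, c < σ₂ ∧ M < σ₂ ∧ σ₀ < σ₂ :=
    ⟨max c (max M σ₀) + 1, by linarith [le_max_left c (max M σ₀)],
      by linarith [le_max_right c (max M σ₀), le_max_left M σ₀],
      by linarith [le_max_right c (max M σ₀), le_max_right M σ₀]⟩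
  have h2I : σ₂ ∈ I := hc h2c
  have hcr := crit_of_localMin p hp t _ _ (hmin σ₂ h2I)
  have hsmall : |ψ σ₂| < min δ abar := by
    by_contra hcon
    push Not at hcon
    have hb := hM _ hcon
    have hpos : 0 < |ψ σ₂| := (lt_min hδ hab).trans_le hcon
    have e : |t.derivative.eval (ψ σ₂)| = σ₂ * |ψ σ₂| ^ p := by
      have : t.derivative.eval (ψ σ₂) = - (σ₂ * (ψ σ₂ * |ψ σ₂| ^ (p - 1))) := by linarith
      rw [this, abs_neg, abs_mul, abs_mul, abs_pow, abs_abs, abs_of_pos (hM0.trans_lt h2M),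
        ← pow_succ', Nat.sub_add_cancel (by omega)]
    rw [e] at hb
    have : 0 < |ψ σ₂| ^ p := by positivity
    nlinarith
  have hpos2 : 0 < ψ σ₂ := by
    have h1 := hδT _ (hsmall.trans_le (min_le_left _ _))
    by_contra hcon
    push Not at hcon
    have h3 : 0 ≤ |ψ σ₂| ^ (p - 1) := by positivity
    have h4 := mul_nonpos_of_nonpos_of_nonneg hcon h3
    nlinarith [hM0.trans_lt h2M]
  have hlt2 : ψ σ₂ < abar := (le_abs_self _).trans_lt (hsmall.trans_le (min_le_right _ _))
  have hposAll : ∀ σ ∈ I, σ ≤ σ₂ → 0 < ψ σ := by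
    intro σ hσ hle
    by_contra hcon
    push Not at hcon
    have hsub := hIc.out hσ h2I
    obtain ⟨y, hy, hy0⟩ := intermediate_value_Icc hle (hcont.mono hsub) ⟨hcon, hpos2.le⟩
    have := crit_of_localMin p hp t _ _ (hmin y (hsub hy))
    rw [hy0] at this
    simp at this
    linarith
  have hG : ∀ σ ∈ I, σ ≤ σ₂ → Gfun p t (ψ σ) = σ := fun σ hσ hle =>
    Gfun_eq_of_localMin p hp t σ _ (hposAll σ hσ hle) (hmin σ hσ)
  refine ⟨hposAll σ₀ hσ₀ h20.le, ?_⟩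
  by_contra hcon
  push Not at hcon
  have hcross : ∀ σ ∈ I, σ ≤ σ₂ → abar ≤ ψ σ →
      σ ≤ Gfun p t abar ∧ Gfun p t abar ≤ σ₂ ∧ ψ (Gfun p t abar) = abar := by
    intro σ hσ hle hge
    have hsub := hIc.out hσ h2I
    obtain ⟨y, hy, hy0⟩ := intermediate_value_Icc' hle (hcont.mono hsub) ⟨hlt2.le, hge⟩
    have := hG y (hsub hy) hy.2
    rw [hy0] at this
    rw [this]
    exact ⟨hy.1, hy.2, hy0⟩
  obtain ⟨ha1, ha2, ha3⟩ := hcross σ₀ hσ₀ h20.le hcon.le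
  have hlt : σ₀ < Gfun p t abar := by
    refine lt_of_le_of_ne ha1 ?_
    intro he
    rw [← he] at ha3
    linarith
  obtain ⟨b, hb, hbG⟩ := hGmin ((hI0 hσ₀ : (0 : ℝ) ≤ σ₀).trans_lt hlt)
  have hsub := hIc.out hσ₀ h2I
  -- intermediate value : some parameter with value in (abar, b)
  obtain ⟨v, hv1, hv2⟩ := exists_between (lt_min hb hcon)
  have hsub' : Set.Icc σ₀ (Gfun p t abar) ⊆ I := fun x hx => hsub ⟨hx.1, hx.2.trans ha2⟩
  obtain ⟨y, hy, hyv⟩ := intermediate_value_Icc' ha1 (hcont.mono hsub')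
    (show v ∈ Set.Icc (ψ (Gfun p t abar)) (ψ σ₀) from
      ⟨by rw [ha3]; exact hv1.le, (hv2.le.trans (min_le_right _ _))⟩)
  have e := hG y (hsub' hy) (hy.2.trans ha2)
  rw [hyv] at e
  have := hbG v hv1 (hv2.trans_le (min_le_left _ _))
  linarith [hy.2]

lemma exists_curve (p : ℕ) (hp : 2 ≤ p) (t : Polynomial ℝ) (h0 : t.derivative.eval 0 < 0)
    (abar : ℝ) (hab : 0 < abar) (hG0 : 0 ≤ Gfun p t abar)
    (hh : ∀ x, 0 < x → x < abar →
      0 < t.derivative.derivative.eval x * x - (p : ℝ) * t.derivative.eval x) :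
    ∃ ψ : ℝ → ℝ, IsMinimizerCurve
      (fun σ s => t.eval s + σ / ((p : ℝ) + 1) * |s| ^ (p + 1)) (Set.Ioi (Gfun p t abar)) ψ ∧
      ∀ x, 0 < x → x < abar → Gfun p t abar < Gfun p t x ∧ ψ (Gfun p t x) = x := by
  have anti := Gfun_anti p hp t abar hh
  have ex : ∀ σ, ∃ x, Gfun p t abar < σ → 0 < x ∧ x < abar ∧ Gfun p t x = σ := by
    intro σ
    by_cases hσ : Gfun p t abar < σ
    · obtain ⟨x, hx⟩ := Gfun_surj p hp t h0 abar hab σ hσ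
      exact ⟨x, fun _ => hx⟩
    · exact ⟨0, fun h => absurd h hσ⟩
  choose ψ hψ using ex
  refine ⟨ψ, ⟨fun σ hσ => hG0.trans (le_of_lt hσ), Set.ordConnected_Ioi, ?_, ?_⟩, ?_⟩
  · intro σ hσ
    obtain ⟨h1, h2, h3⟩ := hψ σ hσ
    have hσ' : Gfun p t abar < σ := hσ
    refine ContinuousAt.continuousWithinAt ?_
    refine tendsto_order.2 ⟨fun a ha => ?_, fun b hb => ?_⟩
    · obtain ⟨v, hv1, hv2⟩ := exists_between (max_lt ha h1)
      have hv0 : 0 < v := (le_max_right _ _).trans_lt hv1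
      have hgv := anti ⟨hv0, (hv2.trans h2).le⟩ ⟨h1, h2.le⟩ hv2
      rw [h3] at hgv
      filter_upwards [Ioo_mem_nhds hσ' hgv] with τ hτ
      obtain ⟨k1, k2, k3⟩ := hψ τ hτ.1
      refine ((le_max_left _ _).trans_lt hv1).trans ?_
      by_contra hcon
      push Not at hcon
      have := anti.antitoneOn ⟨k1, k2.le⟩ ⟨hv0, (hv2.trans h2).le⟩ hcon
      rw [k3] at this
      linarith [hτ.2]
    · obtain ⟨v, hv1, hv2⟩ := exists_between (lt_min hb h2)
      have hva : v < abar := hv2.trans_le (min_le_right _ _)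
      have hgv := anti ⟨h1, h2.le⟩ ⟨h1.trans hv1, hva.le⟩ hv1
      rw [h3] at hgv
      filter_upwards [lt_mem_nhds hσ', lt_mem_nhds hgv] with τ hτ1 hτ2
      obtain ⟨k1, k2, k3⟩ := hψ τ hτ1
      refine lt_of_lt_of_le ?_ (hv2.le.trans (min_le_left _ _))
      by_contra hcon
      push Not at hcon
      have := anti.antitoneOn ⟨h1.trans hv1, hva.le⟩ ⟨k1, k2.le⟩ hcon
      rw [k3] at this
      linarith
  · intro σ hσ
    obtain ⟨h1, h2, h3⟩ := hψ σ hσ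
    have := localMin_of_Gfun p hp t abar hh _ h1 h2
    rw [h3] at this
    exact this
  · intro x hx hxa
    have hlt := anti ⟨hx, hxa.le⟩ ⟨hab, le_rfl⟩ hxa
    obtain ⟨h1, h2, h3⟩ := hψ _ hlt
    exact ⟨hlt, anti.injOn ⟨h1, h2.le⟩ ⟨hx, hxa.le⟩ h3⟩

theorem stmt_9 (p : ℕ) (hp : 2 ≤ p) (t : Polynomial ℝ)
    (hdeg : t.natDegree = p) (h0 : t.derivative.eval 0 < 0)
    (abar : ℝ)
    (hleast : IsLeast {α : ℝ | 0 < α ∧ (t.derivative.eval α = 0 ∨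
      t.derivative.derivative.eval α * α - (p : ℝ) * t.derivative.eval α = 0)} abar)
    (hsimple :
      (t.derivative.eval abar = 0 ∧ t.derivative.derivative.eval abar ≠ 0) ∨
      ((Polynomial.X * t.derivative.derivative - (p : ℝ) • t.derivative).eval abar = 0 ∧
        ((Polynomial.X * t.derivative.derivative
          - (p : ℝ) • t.derivative).derivative).eval abar ≠ 0)) :
    (∀ α ∈ Set.Ioo 0 abar,
      IsPersistentRegMin (fun σ s => t.eval s + σ / ((p : ℝ) + 1) * |s| ^ (p + 1)) α) ∧
    (∀ α : ℝ,
      IsPersistentRegMin (fun σ s => t.eval s + σ / ((p : ℝ) + 1) * |s| ^ (p + 1)) α →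
      α ∈ Set.Ioc 0 abar) := by
  obtain ⟨⟨hab, hroot⟩, hlb⟩ := hleast
  have hnr : ∀ x, 0 < x → x < abar → ¬ (t.derivative.eval x = 0 ∨
      t.derivative.derivative.eval x * x - (p : ℝ) * t.derivative.eval x = 0) :=
    fun x hx hxa hcon => absurd (hlb ⟨hx, hcon⟩) (not_le.2 hxa)
  have hp0 : (0 : ℝ) < p := by exact_mod_cast (by omega : 0 < p)
  set q : Polynomial ℝ :=
    Polynomial.X * t.derivative.derivative - (p : ℝ) • t.derivative with hq
  have hqe : ∀ x, q.eval x =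
      t.derivative.derivative.eval x * x - (p : ℝ) * t.derivative.eval x := by
    intro x
    simp [hq, mul_comm]
  have hT := neg_of_no_root t.derivative h0 abar fun x hx hxa hc => hnr x hx hxa (Or.inl hc)
  have hh : ∀ x, 0 < x → x < abar →
      0 < t.derivative.derivative.eval x * x - (p : ℝ) * t.derivative.eval x := by
    have := neg_of_no_root (-q) (by
      rw [Polynomial.eval_neg, hqe]; nlinarith) abar fun x hx hxa hc => hnr x hx hxa (Or.inr (by
        rw [Polynomial.eval_neg, hqe] at hc; linarith))
    intro x hx hxa
    have h := this x hx hxa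
    rw [Polynomial.eval_neg, hqe] at h
    linarith
  have hTab : t.derivative.eval abar ≤ 0 := by
    refine le_of_tendsto
      ((t.derivative.continuous.tendsto abar).mono_left
        (nhdsWithin_le_nhds : nhdsWithin abar (Set.Iio abar) ≤ _)) ?_
    filter_upwards [Ioo_mem_nhdsLT hab] with x hx
    exact (hT x hx.1 hx.2).le
  have hG0 : 0 ≤ Gfun p t abar := div_nonneg (by linarith) (by positivity)
  have hGmin : 0 < Gfun p t abar → ∃ b, abar < b ∧ ∀ x, abar < x → x < b →
      Gfun p t abar < Gfun p t x := by
    intro hpos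
    rcases hsimple with ⟨h1, _⟩ | ⟨h1, h2⟩
    · simp [Gfun, h1] at hpos
    have hd := q.hasDerivAt abar
    have hdneg : q.derivative.eval abar < 0 := by
      refine lt_of_le_of_ne ?_ h2
      have hs := hd.tendsto_slope.mono_left
        (nhdsWithin_mono abar (fun x (hx : x < abar) => hx.ne) :
          nhdsWithin abar (Set.Iio abar) ≤ _)
      refine le_of_tendsto hs ?_
      filter_upwards [Ioo_mem_nhdsLT hab] with x hx
      rw [slope_def_field, h1]
      have := hh x hx.1 hx.2
      rw [← hqe] at this
      exact div_nonpos_of_nonneg_of_nonpos (by linarith) (by linarith [hx.2])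
    have hs := hd.tendsto_slope.mono_left
        (nhdsWithin_mono abar (fun x (hx : abar < x) => hx.ne') :
          nhdsWithin abar (Set.Ioi abar) ≤ _)
    obtain ⟨b, hb, hbs⟩ := (mem_nhdsGT_iff_exists_Ioo_subset).1 (hs.eventually_lt_const hdneg)
    refine ⟨b, hb, ?_⟩
    have mono : StrictMonoOn (Gfun p t) (Set.Ico abar b) := by
      refine strictMonoOn_of_deriv_pos (convex_Ico _ _)
        ((continuousOn_Gfun p hp t).mono fun x hx => hab.trans_le hx.1) ?_
      intro x hx
      rw [interior_Ico] at hx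
      have hx0 : 0 < x := hab.trans hx.1
      rw [(hasDerivAt_Gfun p hp t x hx0).deriv, ← hqe]
      have hsl : slope (fun x => q.eval x) abar x < 0 := hbs hx
      rw [slope_def_field, h1, sub_zero, div_neg_iff] at hsl
      have : q.eval x < 0 := by
        rcases hsl with h | h
        · linarith [hx.1, h.2]
        · exact h.1
      exact div_pos (by linarith) (by positivity)
    intro x hx hxb
    exact mono ⟨le_rfl, hb⟩ ⟨hx.le, hxb⟩ hx
  have hbound := curve_bound p hp t hdeg h0 abar hab hGmin
  have anti := Gfun_anti p hp t abar hh
  refine ⟨?_, ?_⟩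
  · intro α hα
    obtain ⟨ψ, hψ, hψG⟩ := exists_curve p hp t h0 abar hab hG0 hh
    obtain ⟨hα1, hα2⟩ := hψG α hα.1 hα.2
    -- any curve extending the base one lives on `[G abar, ∞)`
    have hsub : ∀ J φ, IsMinimizerCurve
        (fun σ s => t.eval s + σ / ((p : ℝ) + 1) * |s| ^ (p + 1)) J φ →
        Set.Ioi (Gfun p t abar) ⊆ J → J ⊆ Set.Ici (Gfun p t abar) := by
      intro J φ hJ hIJ σ hσ
      have hb := hbound J φ hJ _ hIJ σ hσ
      have e := Gfun_eq_of_localMin p hp t σ _ hb.1 (hJ.2.2.2 σ hσ)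
      have := anti.antitoneOn ⟨hb.1, hb.2⟩ ⟨hab, le_rfl⟩ hb.2
      rw [e] at this
      exact this
    by_cases hex : ∃ φ, IsMinimizerCurve
        (fun σ s => t.eval s + σ / ((p : ℝ) + 1) * |s| ^ (p + 1)) (Set.Ici (Gfun p t abar)) φ ∧
        ∀ σ ∈ Set.Ioi (Gfun p t abar), φ σ = ψ σ
    · obtain ⟨φ, hφ, hφe⟩ := hex
      refine ⟨_, φ, ⟨hφ, ?_⟩, ⟨Gfun p t abar, hG0, Set.Ioi_subset_Ici_self⟩,
        Gfun p t α, le_of_lt hα1, by rw [hφe _ hα1, hα2]⟩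
      intro J χ hJ hIJ _
      exact (hsub J χ hJ (Set.Ioi_subset_Ici_self.trans hIJ)).antisymm hIJ
    · refine ⟨_, ψ, ⟨hψ, ?_⟩, ⟨Gfun p t abar, hG0, subset_rfl⟩, Gfun p t α, hα1, hα2⟩
      intro J χ hJ hIJ hχ
      have hs := hsub J χ hJ hIJ
      refine Set.Subset.antisymm (fun σ hσ => ?_) hIJ
      refine lt_of_le_of_ne (show Gfun p t abar ≤ σ from hs hσ) ?_
      intro he
      apply hex
      have : J = Set.Ici (Gfun p t abar) := by
        refine hs.antisymm fun τ hτ => ?_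
        rcases eq_or_lt_of_le (show Gfun p t abar ≤ τ from hτ) with h | h
        · rw [← h, he]; exact hσ
        · exact hIJ h
      exact ⟨χ, this ▸ hJ, hχ⟩
  · rintro α ⟨I, ψ, hmax, ⟨c, _, hc⟩, σ, hσ, rfl⟩
    exact hbound I ψ hmax.1 c hc σ hσ
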